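/- arXiv:2511.07102 — 2 statements merged into one kernel-verified Lean document; each statement's English description precedes it below -/
import Mathlib

section
/- Let E be a complex normed vector space, let U ⊆ E be an open preconnected set, and let f₁, …, f_k : U → ℂ be finitely many functions holomorphic on U. Define L : U → ℝ by L(z) = max_{1 ≤ i ≤ k} Im(f_i z). If L attains its maximum over U at some point z₀ ∈ U, then every index i with Im(f_i z₀) = L(z₀) satisfies that Im(f_i) is constant on U, and consequently L is constant on U. -/
/-!
A function `Im fᵢ` with `Im (fᵢ z₀) = L z₀` lies below `L` and touches it at `z₀`, so it has a
maximum of its own there. Since `‖exp g‖ = exp (Re g)`, the maximum modulus principle applied to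
`exp (-I * fᵢ)` makes `Im fᵢ` constant. Then `L z₀ = Im (fᵢ z₀) = Im (fᵢ z) ≤ L z ≤ L z₀`.
-/

open Complex Function Set

section Order

variable {α β : Type*} {s : Set α} {u L : α → β} {c : α}

theorem isMaxOn_of_le_of_eq [Preorder β] (hmax : IsMaxOn L s c) (hle : ∀ x ∈ s, u x ≤ L x)
    (heq : u c = L c) : IsMaxOn u s c :=
  fun x hx => ((hle x hx).trans (hmax hx)).trans_eq heq.symm

theorem eqOn_const_of_isMaxOn_of_le_of_eq [PartialOrder β] (hmax : IsMaxOn L s c)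
    (hle : ∀ x ∈ s, u x ≤ L x) (heq : u c = L c) (hu : EqOn u (const α (u c)) s) :
    EqOn L (const α (L c)) s := by
  refine fun x hx => (hmax hx).antisymm ?_
  calc L c = u c := heq.symm
    _ = u x := (hu hx).symm
    _ ≤ L x := hle x hx

end Order

section MaximumPrinciple

variable {E : Type*} [NormedAddCommGroup E] [NormedSpace ℂ E] {U : Set E}

theorem re_eqOn_of_isPreconnected_of_isMaxOn {g : E → ℂ} {c : E} (hUc : IsPreconnected U)
    (hU : IsOpen U) (hg : DifferentiableOn ℂ g U) (hc : c ∈ U)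
    (hmax : IsMaxOn (fun z => (g z).re) U c) :
    EqOn (fun z => (g z).re) (const E (g c).re) U := by
  have norm_exp_comp : (norm ∘ fun z => exp (g z)) = fun z => Real.exp (g z).re :=
    funext fun z => norm_exp (g z)
  have hmax_exp : IsMaxOn (norm ∘ fun z => exp (g z)) U c := by
    rw [norm_exp_comp]
    exact hmax.comp_mono Real.exp_monotone
  intro z hz
  have norm_exp_eq : ‖exp (g z)‖ = ‖exp (g c)‖ :=
    norm_eqOn_of_isPreconnected_of_isMaxOn hUc hU hg.cexp hc hmax_exp hz
  rw [norm_exp, norm_exp] at norm_exp_eq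
  exact Real.exp_injective norm_exp_eq

theorem im_eqOn_of_isPreconnected_of_isMaxOn {g : E → ℂ} {c : E} (hUc : IsPreconnected U)
    (hU : IsOpen U) (hg : DifferentiableOn ℂ g U) (hc : c ∈ U)
    (hmax : IsMaxOn (fun z => (g z).im) U c) :
    EqOn (fun z => (g z).im) (const E (g c).im) U := by
  have re_neg_I_mul (w : ℂ) : (-I * w).re = w.im := by simp
  simpa only [re_neg_I_mul] using
    re_eqOn_of_isPreconnected_of_isMaxOn hUc hU (hg.const_mul (-I)) hc
      (by simpa only [re_neg_I_mul] using hmax)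

theorem max_of_im_max_principle_general {ι : Sort*} (hU : IsOpen U) (hUc : IsPreconnected U)
    (f : ι → E → ℂ) (hf : ∀ i, DifferentiableOn ℂ (f i) U)
    (L : E → ℝ) (hL : ∀ i, ∀ z ∈ U, (f i z).im ≤ L z)
    {z₀ : E} (hz₀ : z₀ ∈ U) (hmax : ∀ z ∈ U, L z ≤ L z₀) :
    (∀ i, (f i z₀).im = L z₀ → ∀ z ∈ U, (f i z).im = (f i z₀).im) ∧
      ((∃ i, (f i z₀).im = L z₀) → ∀ z ∈ U, L z = L z₀) := by
  have isMaxOn_L : IsMaxOn L U z₀ := isMaxOn_iff.2 hmax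
  have im_eqOn (i : ι) (hi : (f i z₀).im = L z₀) :
      EqOn (fun z => (f i z).im) (const E (f i z₀).im) U :=
    im_eqOn_of_isPreconnected_of_isMaxOn hUc hU (hf i) hz₀
      (isMaxOn_of_le_of_eq isMaxOn_L (hL i) hi)
  refine ⟨fun i hi z hz => im_eqOn i hi hz, ?_⟩
  rintro ⟨i, hi⟩ z hz
  exact eqOn_const_of_isMaxOn_of_le_of_eq isMaxOn_L (hL i) hi (im_eqOn i hi) hz

end MaximumPrinciple

/-- Maximum principle for the maximum of finitely many pluriharmonic functions
`Im (fᵢ)` with `fᵢ` holomorphic on an open preconnected set `U`: if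
`L = maxᵢ Im (fᵢ)` attains its maximum over `U` at `z₀ ∈ U`, then every index `i`
realizing the maximum at `z₀` has `Im (fᵢ)` constant on `U`, and `L` is constant on `U`. -/
theorem max_of_im_max_principle {E : Type*} [NormedAddCommGroup E] [NormedSpace ℂ E]
    {U : Set E} (hU : IsOpen U) (hUc : IsPreconnected U)
    {k : ℕ} (hk : 0 < k) (f : Fin k → E → ℂ)
    (hf : ∀ i, DifferentiableOn ℂ (f i) U)
    (L : E → ℝ) (hL : ∀ z, L z = ⨆ i, (f i z).im)
    {z₀ : E} (hz₀ : z₀ ∈ U) (hmax : ∀ z ∈ U, L z ≤ L z₀) :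
    (∀ i, (f i z₀).im = L z₀ → ∀ z ∈ U, (f i z).im = (f i z₀).im) ∧
      (∀ z ∈ U, L z = L z₀) := by
  have : Nonempty (Fin k) := ⟨⟨0, hk⟩⟩
  have im_le (i : Fin k) (z : E) (_ : z ∈ U) : (f i z).im ≤ L z :=
    hL z ▸ Finite.le_ciSup (fun j => (f j z).im) i
  have attained : ∃ i, (f i z₀).im = L z₀ := hL z₀ ▸ exists_eq_ciSup_of_finite
  exact (max_of_im_max_principle_general hU hUc f hf L im_le hz₀ hmax).imp_right (· attained)
end

section
/- Let E be a complex normed vector space, let U ⊆ E be an open preconnected set, and let L : U → ℝ be continuous. Suppose that for every z ∈ U there exist an open neighborhood V of z with V ⊆ U and finitely many functions f₁, …, f_k : V → ℂ holomorphic on V such that L(w) = max_{1 ≤ i ≤ k} Im(f_i w) for all w ∈ V. If L attains its maximum over U at some point z₀ ∈ U, then L is constant on U. -/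
/-!
Let `M = L z₀`. The set `{L = M}` is relatively closed in `U` because `L` is upper semicontinuous
and `L ≤ M`. It is also open: if `L z = M`, some holomorphic `f` (one achieving the maximum at `z`)
satisfies `Im f ≤ L ≤ M` near `z`, with equality at `z`. The maximum modulus principle for
`exp (-i f)`, whose modulus is `exp (Im f)`, then makes `Im f` constant near `z`, and `L` is
squeezed between `Im f = M` and `M`.
-/

open Filter Set Topology

theorem eqOn_const_of_isPreconnected_of_isMaxOn {X α : Type*} [TopologicalSpace X] [LinearOrder α]
    {U : Set X} {L : X → α} {z₀ : X} (hU : IsPreconnected U) (hL : UpperSemicontinuousOn L U)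
    (hopen : ∀ z ∈ U, IsMaxOn L U z → ∀ᶠ w in 𝓝[U] z, L w = L z)
    (hz₀ : z₀ ∈ U) (hmax : IsMaxOn L U z₀) : EqOn L (fun _ ↦ L z₀) U := by
  have hlocal : ∀ z ∈ U, ∀ᶠ w in 𝓝[U] z, (L z = L z₀ ↔ L w = L z₀) := by
    intro z hz
    rcases (hmax hz).lt_or_eq with hlt | heq
    · filter_upwards [hL z hz _ hlt] with w hw
      exact iff_of_false hlt.ne hw.ne
    · have hzmax : IsMaxOn L U z := fun w hw ↦ (hmax hw).trans_eq heq.symm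
      filter_upwards [hopen z hz hzmax] with w hw
      rw [hw]
  intro z hz
  exact (hU.induction₂ (fun x y ↦ L x = L z₀ ↔ L y = L z₀) hlocal
    (fun _ _ _ _ _ _ ↦ Iff.trans) (fun _ _ _ _ ↦ Iff.symm) hz₀ hz).1 rfl

section PluriharmonicSupport

variable {E : Type*} [NormedAddCommGroup E] [NormedSpace ℂ E]

theorem eventually_im_eq_of_isLocalMax {f : E → ℂ} {z : E}
    (hf : ∀ᶠ w in 𝓝 z, DifferentiableAt ℂ f w) (hmax : IsLocalMax (fun w ↦ (f w).im) z) :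
    ∀ᶠ w in 𝓝 z, (f w).im = (f z).im := by
  have norm_exp_eq (w : E) : ‖Complex.exp (-Complex.I * f w)‖ = Real.exp (f w).im := by
    simp [Complex.norm_exp]
  have hexp : ∀ᶠ w in 𝓝 z, DifferentiableAt ℂ (fun w ↦ Complex.exp (-Complex.I * f w)) w :=
    hf.mono fun w hw ↦ (hw.const_mul _).cexp
  have hnorm : IsLocalMax (norm ∘ fun w ↦ Complex.exp (-Complex.I * f w)) z :=
    hmax.mono fun w hw ↦ by
      simpa only [Function.comp_apply, norm_exp_eq, Real.exp_le_exp] using hw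
  filter_upwards [Complex.norm_eventually_eq_of_isLocalMax hexp hnorm] with w hw
  simpa only [norm_exp_eq, Real.exp_eq_exp] using hw

/-- `L` is supported from below at `z` by a pluriharmonic function: near `z` some pluriharmonic
function is at most `L`, with equality at `z`. A finite maximum of pluriharmonic functions has such
supports, and the maximum principle holds for functions that have them. Pluriharmonic functions are
encoded as imaginary parts of functions holomorphic near `z`. -/
def HasPluriharmonicSupportAt (L : E → ℝ) (z : E) : Prop :=
  ∃ f : E → ℂ, (∀ᶠ w in 𝓝 z, DifferentiableAt ℂ f w) ∧ (f z).im = L z ∧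
    ∀ᶠ w in 𝓝 z, (f w).im ≤ L w

theorem hasPluriharmonicSupportAt_of_eqOn_iSup {ι : Type*} [Finite ι] [Nonempty ι]
    {L : E → ℝ} {z : E} {V : Set E} {f : ι → E → ℂ} (hV : V ∈ 𝓝 z)
    (hf : ∀ i, DifferentiableOn ℂ (f i) V) (hL : EqOn L (fun w ↦ ⨆ i, (f i w).im) V) :
    HasPluriharmonicSupportAt L z := by
  obtain ⟨i, hi⟩ := exists_eq_ciSup_of_finite (f := fun i ↦ (f i z).im)
  refine ⟨f i, (hf i).eventually_differentiableAt hV,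
    hi.trans (hL (mem_of_mem_nhds hV)).symm, ?_⟩
  filter_upwards [hV] with w hw
  exact (Finite.le_ciSup (fun i ↦ (f i w).im) i).trans_eq (hL hw).symm

theorem HasPluriharmonicSupportAt.eventually_eq_of_isLocalMax {L : E → ℝ} {z : E}
    (hL : HasPluriharmonicSupportAt L z) (hmax : IsLocalMax L z) : ∀ᶠ w in 𝓝 z, L w = L z := by
  obtain ⟨f, hf, hfz, hfL⟩ := hL
  have him : IsLocalMax (fun w ↦ (f w).im) z := by
    filter_upwards [hfL, hmax] with w hfw hw
    exact (hfw.trans hw).trans_eq hfz.symm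
  filter_upwards [hfL, hmax, eventually_im_eq_of_isLocalMax hf him] with w hfw hw heq
  exact hw.antisymm ((heq.trans hfz).symm.trans_le hfw)

theorem locally_max_im_max_principle_general {U : Set E} (hU : IsOpen U) (hUc : IsPreconnected U)
    {L : E → ℝ} (hL : UpperSemicontinuousOn L U)
    (hsupport : ∀ z ∈ U, HasPluriharmonicSupportAt L z)
    {z₀ : E} (hz₀ : z₀ ∈ U) (hmax : IsMaxOn L U z₀) :
    ∀ z ∈ U, L z = L z₀ :=
  eqOn_const_of_isPreconnected_of_isMaxOn hUc hL
    (fun z hz hzmax ↦ eventually_nhdsWithin_of_eventually_nhds <|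
      (hsupport z hz).eventually_eq_of_isLocalMax (hzmax.isLocalMax (hU.mem_nhds hz))) hz₀ hmax

end PluriharmonicSupport

/-- Maximum principle for a continuous function on an open preconnected set `U`
which is locally the maximum of finitely many pluriharmonic functions `Im (fᵢ)`
(with `fᵢ` holomorphic): if it attains its maximum over `U`, it is constant on `U`. -/
theorem locally_max_im_max_principle {E : Type*} [NormedAddCommGroup E] [NormedSpace ℂ E]
    {U : Set E} (hU : IsOpen U) (hUc : IsPreconnected U)
    {L : E → ℝ} (hL : ContinuousOn L U)
    (hloc : ∀ z ∈ U, ∃ V : Set E, IsOpen V ∧ z ∈ V ∧ V ⊆ U ∧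
      ∃ k : ℕ, 0 < k ∧ ∃ f : Fin k → E → ℂ,
        (∀ i, DifferentiableOn ℂ (f i) V) ∧
        ∀ w ∈ V, L w = ⨆ i, (f i w).im)
    {z₀ : E} (hz₀ : z₀ ∈ U) (hmax : ∀ z ∈ U, L z ≤ L z₀) :
    ∀ z ∈ U, L z = L z₀ := by
  refine locally_max_im_max_principle_general hU hUc hL.upperSemicontinuousOn (fun z hz ↦ ?_) hz₀
    hmax
  obtain ⟨V, hV, hzV, -, k, hk, f, hf, hLf⟩ := hloc z hz
  have : NeZero k := ⟨hk.ne'⟩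
  exact hasPluriharmonicSupportAt_of_eqOn_iSup (hV.mem_nhds hzV) hf hLf
end
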